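/- arXiv:1111.4493 — 2 statements merged into one kernel-verified Lean document; each statement's English description precedes it below -/
import Mathlib

section
/- Let k and m be positive integers with m ≤ k and m odd. If A is an intersecting collection of k-multisets on {1,…,m}, then |A| ≤ |M_{(>m/2)}|, where M_{(>m/2)} is the collection of all k-multisets on {1,…,m} containing more than m/2 distinct elements. Moreover, equality holds if and only if A = M_{(>m/2)}. -/
/-!
Let `𝒜` be the set of supports of the multisets in `A`. These supports pairwise meet, so `𝒜` never
contains both `T` and `Tᶜ`. As `m` is odd, replacing every `T ∈ 𝒜` having at most `m / 2` elements
by `Tᶜ` injects `𝒜` into the sets having more than `m / 2` elements. Exactly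
`(k - 1).choose (k - #T)` multisets have support `T`. As `m ≤ k`, for `2 * #T < m` this number is
strictly smaller than the one for `Tᶜ`, so every replacement strictly increases the number of
multisets carried by the family.
-/

open Finset

theorem strictMonoOn_choose_Iic_half (n : ℕ) : StrictMonoOn n.choose (Set.Iic (n / 2)) := by
  refine strictMonoOn_of_lt_succ Set.ordConnected_Iic fun a _ _ ha => ?_
  rw [Order.succ_eq_add_one] at ha ⊢
  rw [Set.mem_Iic] at ha
  refine lt_of_mul_lt_mul_right (a := a + 1) ?_ (Nat.zero_le _)
  calc n.choose a * (a + 1) < n.choose a * (n - a) :=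
        Nat.mul_lt_mul_of_pos_left (by omega) (Nat.choose_pos (by omega))
    _ = n.choose (a + 1) * (a + 1) := (Nat.choose_succ_right_eq n a).symm

theorem choose_lt_choose_of_lt_add {n a b : ℕ} (ha : a ≤ n) (hab : a < b) (h : n < a + b) :
    n.choose b < n.choose a := by
  obtain hb | hb := lt_or_ge n b
  · rw [Nat.choose_eq_zero_of_lt hb]
    exact Nat.choose_pos ha
  rw [← Nat.choose_symm hb]
  obtain ha' | ha' := le_or_gt a (n / 2)
  · exact strictMonoOn_choose_Iic_half n (Set.mem_Iic.mpr (by omega)) ha' (by omega)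
  · rw [← Nat.choose_symm ha]
    exact strictMonoOn_choose_Iic_half n (Set.mem_Iic.mpr (by omega))
      (Set.mem_Iic.mpr (by omega)) (by omega)

theorem sum_lt_sum_of_intersecting_of_lt_compl {β N : Type*} [BooleanAlgebra β] [AddCommMonoid N]
    [PartialOrder N] [IsOrderedCancelAddMonoid N] [CanonicallyOrderedAdd N] {𝒜 ℒ : Finset β}
    (h𝒜 : (𝒜 : Set β).Intersecting) (hℒ : ∀ T ∈ 𝒜, T ∉ ℒ → Tᶜ ∈ ℒ) {w : β → N}
    (hw : ∀ T ∈ 𝒜, T ∉ ℒ → w T < w Tᶜ) (hne : ¬𝒜 ⊆ ℒ) : ∑ T ∈ 𝒜, w T < ∑ T ∈ ℒ, w T := by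
  classical
  have hmaps : (𝒜 \ ℒ).image compl ⊆ ℒ \ 𝒜 := by
    refine image_subset_iff.mpr fun T hT => ?_
    obtain ⟨hT𝒜, hTℒ⟩ := mem_sdiff.mp hT
    exact mem_sdiff.mpr ⟨hℒ T hT𝒜 hTℒ, h𝒜.compl_notMem hT𝒜⟩
  rw [← sum_inter_add_sum_sdiff 𝒜 ℒ, ← sum_inter_add_sum_sdiff ℒ 𝒜, inter_comm ℒ]
  refine add_lt_add_right ?_ _
  calc ∑ T ∈ 𝒜 \ ℒ, w T < ∑ T ∈ 𝒜 \ ℒ, w Tᶜ :=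
        sum_lt_sum_of_nonempty (sdiff_nonempty.mpr hne) fun T hT =>
          hw T (mem_sdiff.mp hT).1 (mem_sdiff.mp hT).2
    _ = ∑ T ∈ (𝒜 \ ℒ).image compl, w T := (sum_image compl_injective.injOn).symm
    _ ≤ ∑ T ∈ ℒ \ 𝒜, w T := sum_le_sum_of_subset hmaps

section Multisets

variable {α : Type*} [DecidableEq α] {k : ℕ}

theorem card_finset_sym (T : Finset α) (n : ℕ) : #(T.sym n) = (#T).multichoose n := by
  have hmap := sym_map (n := n) (Function.Embedding.subtype (· ∈ T)) univ
  rw [univ_eq_attach, attach_map_val, ← univ_eq_attach, sym_univ] at hmap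
  rw [hmap, card_map, card_univ, Sym.card_sym_eq_multichoose, Fintype.card_coe]

/-- The set of distinct elements of a multiset. -/
def symSupport (s : Sym α k) : Finset α := (s : Multiset α).toFinset

theorem mem_symSupport {s : Sym α k} {x : α} : x ∈ symSupport s ↔ x ∈ s := Multiset.mem_toFinset

/-- The multisets of cardinality `k` whose underlying set is `T`. -/
def symWithSupport (T : Finset α) (k : ℕ) : Finset (Sym α k) :=
  {s ∈ T.sym k | symSupport s = T}

theorem mem_symWithSupport {T : Finset α} {s : Sym α k} :
    s ∈ symWithSupport T k ↔ symSupport s = T := by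
  refine ⟨fun hs => (mem_filter.mp hs).2, fun hs => mem_filter.mpr ⟨?_, hs⟩⟩
  exact mem_sym_iff.mpr fun x hx => hs ▸ mem_symSupport.mpr hx

theorem symWithSupport_add_card (T : Finset α) (n : ℕ) :
    symWithSupport T (n + #T) =
      (T.sym n).image fun s => s.append (Sym.mk T.val T.card_val) := by
  ext t
  rw [mem_symWithSupport, mem_image]
  constructor
  · intro ht
    have hle : T.val ≤ (t : Multiset α) := (congrArg val ht).ge.trans (Multiset.dedup_le _)
    refine ⟨⟨(t : Multiset α) - T.val, ?_⟩, mem_sym_iff.mpr fun x hx => ?_, ?_⟩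
    · rw [Multiset.card_sub hle, Sym.card_coe, card_val, Nat.add_sub_cancel]
    · rw [← ht, mem_symSupport]
      exact Multiset.mem_of_le (Multiset.sub_le_self _ _) hx
    · exact Subtype.ext (tsub_add_cancel_of_le hle)
  · rintro ⟨s, hs, rfl⟩
    rw [symSupport, Sym.coe_append, Sym.coe_mk, Multiset.toFinset_add, val_toFinset, union_eq_right]
    exact fun x hx => mem_sym_iff.mp hs x (Multiset.mem_toFinset.mp hx)

theorem card_symWithSupport {T : Finset α} (hT : #T ≤ k) :
    #(symWithSupport T k) = (k - 1).choose (k - #T) := by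
  obtain ⟨n, rfl⟩ := Nat.exists_eq_add_of_le' hT
  rw [symWithSupport_add_card, card_image_of_injective _ fun _ _ => (Sym.append_inj_left _).mp,
    card_finset_sym, Nat.multichoose_eq, Nat.add_sub_cancel, add_comm]

theorem intersecting_image_symSupport {A : Finset (Sym α k)}
    (hA : ∀ s ∈ A, ∀ t ∈ A, ∃ x, x ∈ s ∧ x ∈ t) :
    (A.image symSupport : Set (Finset α)).Intersecting := by
  rw [coe_image]
  rintro _ ⟨s, hs, rfl⟩ _ ⟨t, ht, rfl⟩
  obtain ⟨x, hxs, hxt⟩ := hA s hs t ht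
  exact not_disjoint_iff.mpr ⟨x, mem_symSupport.mpr hxs, mem_symSupport.mpr hxt⟩

variable [Fintype α]

variable (α k) in
/-- The multisets of cardinality `k` containing more than half of the elements of `α`: the family
`M_{(>m/2)}` when `α` has `m` elements. -/
def symWithLargeSupport : Finset (Sym α k) :=
  {s : Sym α k | Fintype.card α < 2 * #(symSupport s)}

theorem card_symWithSupport_lt_compl {T : Finset α} (hk : Fintype.card α ≤ k)
    (hT : 2 * #T < Fintype.card α) : #(symWithSupport T k) < #(symWithSupport Tᶜ k) := by
  have hcompl := card_add_card_compl T
  rw [card_symWithSupport (by omega), card_symWithSupport (by omega)]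
  exact choose_lt_choose_of_lt_add (by omega) (by omega) (by omega)

theorem card_filter_symSupport_mem (𝒯 : Finset (Finset α)) :
    #{s : Sym α k | symSupport s ∈ 𝒯} = ∑ T ∈ 𝒯, #(symWithSupport T k) := by
  rw [← sum_card_fiberwise_eq_card_filter]
  refine sum_congr rfl fun T _ => congrArg card ?_
  ext s
  rw [mem_filter_univ, mem_symWithSupport]

theorem card_lt_of_intersecting_of_not_subset (hα : Odd (Fintype.card α))
    (hk : Fintype.card α ≤ k) {A : Finset (Sym α k)}
    (hA : ∀ s ∈ A, ∀ t ∈ A, ∃ x, x ∈ s ∧ x ∈ t) (hne : ¬A ⊆ symWithLargeSupport α k) :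
    #A < #(symWithLargeSupport α k) := by
  let supports := A.image symSupport
  let large : Finset (Finset α) := {T | Fintype.card α < 2 * #T}
  have mem_large (T : Finset α) : T ∈ large ↔ Fintype.card α < 2 * #T := mem_filter_univ T
  have hsmall (T : Finset α) (hT : T ∉ large) : 2 * #T < Fintype.card α := by
    obtain ⟨r, hr⟩ := hα
    rw [mem_large] at hT
    omega
  have hcompl (T : Finset α) (hT : T ∉ large) : Tᶜ ∈ large := by
    have hcard := card_add_card_compl T
    have hlt := hsmall T hT
    rw [mem_large]
    omega
  have hnot_subset : ¬supports ⊆ large := fun h => hne fun s hs =>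
    (mem_filter_univ s).mpr ((mem_large _).mp (h (mem_image_of_mem symSupport hs)))
  calc #A ≤ #{s : Sym α k | symSupport s ∈ supports} :=
        card_le_card fun s hs => (mem_filter_univ s).mpr (mem_image_of_mem _ hs)
    _ = ∑ T ∈ supports, #(symWithSupport T k) := card_filter_symSupport_mem supports
    _ < ∑ T ∈ large, #(symWithSupport T k) :=
        sum_lt_sum_of_intersecting_of_lt_compl (intersecting_image_symSupport hA)
          (fun T _ => hcompl T) (fun T _ hT => card_symWithSupport_lt_compl hk (hsmall T hT))
          hnot_subset
    _ = #{s : Sym α k | symSupport s ∈ large} := (card_filter_symSupport_mem large).symm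
    _ = #(symWithLargeSupport α k) := by simp only [symWithLargeSupport, mem_large]

theorem stmt_4_general (hα : Odd (Fintype.card α)) (hk : Fintype.card α ≤ k)
    (A : Finset (Sym α k)) (hA : ∀ s ∈ A, ∀ t ∈ A, ∃ x, x ∈ s ∧ x ∈ t) :
    #A ≤ #(symWithLargeSupport α k) ∧
      (#A = #(symWithLargeSupport α k) ↔ A = symWithLargeSupport α k) := by
  by_cases hsub : A ⊆ symWithLargeSupport α k
  · exact ⟨card_le_card hsub, fun heq => eq_of_subset_of_card_le hsub heq.ge, congrArg card⟩
  · have hlt := card_lt_of_intersecting_of_not_subset hα hk hA hsub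
    exact ⟨hlt.le, fun heq => absurd heq hlt.ne, congrArg card⟩

end Multisets

/-- For `m ≤ k` with `m` odd, an intersecting collection `A` of `k`-multisets on `{1,…,m}`
satisfies `|A| ≤ |M_{(>m/2)}|`, with equality iff `A = M_{(>m/2)}`, where `M_{(>m/2)}`
is the collection of all `k`-multisets whose support has more than `m/2` elements. -/
theorem stmt_4 (k m : ℕ) (hk : 0 < k) (hm : 0 < m) (hmk : m ≤ k) (hodd : Odd m)
    (A : Finset (Sym (Fin m) k))
    (hint : ∀ s ∈ A, ∀ t ∈ A, ∃ x : Fin m, x ∈ s ∧ x ∈ t) :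
    A.card ≤ (Finset.univ.filter
        (fun s : Sym (Fin m) k => m < 2 * (s : Multiset (Fin m)).toFinset.card)).card ∧
    (A.card = (Finset.univ.filter
        (fun s : Sym (Fin m) k => m < 2 * (s : Multiset (Fin m)).toFinset.card)).card ↔
      A = Finset.univ.filter
        (fun s : Sym (Fin m) k => m < 2 * (s : Multiset (Fin m)).toFinset.card)) := by
  simpa only [symWithLargeSupport, symSupport, Fintype.card_fin] using
    stmt_4_general (by rwa [Fintype.card_fin]) (by rwa [Fintype.card_fin]) A hint
end

section
/- Let k and m be positive integers and let n = m + k − 1. There exists a bijection f from the k-element subsets of {1,…,n} to the k-multisets on {1,…,m} such that for every k-subset B of {1,…,n}, the set of distinct elements (support) of f(B) equals B ∩ {1,…,m}. -/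
/-!
Group the `k`-subsets `B` of the ground set by their trace on the `m` distinguished points, and the
`k`-multisets on these points by their support. Removing the trace `s` from `B` leaves an arbitrary
`(k - #s)`-subset of the other `k - 1` points; removing one copy of each element of `s` from a
multiset with support `s` leaves an arbitrary `(k - #s)`-multiset on `s`. Both fibers over `s`
therefore have `(k - 1).choose (k - #s)` elements, and bijections between the fibers glue.
-/

open Finset

section Fibers

variable {α β : Type*}

/-- The fiber over `s` of taking left parts of `k`-subsets of `α ⊕ β`, parametrized by right parts.
The cardinality condition is additive, so that the fiber is empty when `k < #s`. -/
def toLeftFiberEquiv (s : Finset α) (k : ℕ) :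
    {B : {B : Finset (α ⊕ β) // #B = k} // B.1.toLeft = s} ≃
      {t : Finset β // #s + #t = k} where
  toFun B := ⟨B.1.1.toRight, by
    simpa only [B.2, B.1.2] using card_toLeft_add_card_toRight (u := B.1.1)⟩
  invFun t := ⟨⟨s.disjSum t.1, by rw [card_disjSum, t.2]⟩, toLeft_disjSum⟩
  left_inv := by
    rintro ⟨⟨B, hB⟩, rfl⟩
    exact Subtype.ext (Subtype.ext toLeft_disjSum_toRight)
  right_inv _ := Subtype.ext toRight_disjSum

theorem toFinset_eq_iff_exists_val_add_map [DecidableEq α] {s : Finset α} {t : Multiset α} :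
    t.toFinset = s ↔ ∃ u : Multiset s, s.val + u.map Subtype.val = t := by
  constructor
  · rintro rfl
    have hrest : ∀ a ∈ t - t.toFinset.val, a ∈ t.toFinset := fun a ha ↦
      Multiset.mem_toFinset.2 (Multiset.mem_of_le (Multiset.sub_le_self _ _) ha)
    lift t - t.toFinset.val to Multiset t.toFinset using hrest with u hu
    exact ⟨u, hu ▸ add_tsub_cancel_of_le (Multiset.dedup_le t)⟩
  · rintro ⟨u, rfl⟩
    have hu : (u.map Subtype.val).toFinset ⊆ s := by
      intro a ha
      obtain ⟨x, -, rfl⟩ := Multiset.mem_map.1 (Multiset.mem_toFinset.1 ha)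
      exact x.2
    rw [Multiset.toFinset_add, val_toFinset, union_eq_left.2 hu]

/-- The fiber over `s` of taking supports of `k`-multisets on `α`, parametrized by the multiset that
remains after removing one copy of each element of `s`. -/
noncomputable def supportFiberEquiv [DecidableEq α] (s : Finset α) (k : ℕ) :
    {t : Sym α k // (t : Multiset α).toFinset = s} ≃
      {u : Multiset s // #s + u.card = k} :=
  .symm <| .ofBijective
    (fun u ↦ ⟨⟨s.val + u.1.map Subtype.val, by simpa using u.2⟩,
      toFinset_eq_iff_exists_val_add_map.2 ⟨u.1, rfl⟩⟩) <| by
    constructor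
    · intro u v huv
      have hval : s.val + u.1.map Subtype.val = s.val + v.1.map Subtype.val :=
        congrArg (fun t ↦ (t.1 : Multiset α)) huv
      exact Subtype.ext (Multiset.map_injective Subtype.val_injective (add_left_cancel hval))
    · rintro ⟨⟨t, ht⟩, hts⟩
      obtain ⟨u, rfl⟩ := toFinset_eq_iff_exists_val_add_map.1 hts
      exact ⟨⟨u, by simpa using ht⟩, rfl⟩

theorem nonempty_finset_equiv_sym [Finite α] [Finite β] {j : ℕ}
    (h : Nat.card α + j = Nat.card β + 1) :
    Nonempty ({t : Finset β // #t = j} ≃ Sym α j) := by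
  have := Fintype.ofFinite β
  refine Finite.card_eq.1 ?_
  calc
    Nat.card {t : Finset β // #t = j} = (Nat.card β).choose j := by
      rw [Nat.card_eq_fintype_card, Fintype.card_finset_len, Nat.card_eq_fintype_card]
    _ = (Nat.card α).multichoose j := by rw [Nat.multichoose_eq, h, Nat.add_sub_cancel]
    _ = Nat.card (Sym α j) := (Sym.natCard_sym_eq_multichoose α j).symm

theorem nonempty_toLeft_fiber_equiv_support_fiber [DecidableEq α] [Finite β] {k : ℕ}
    (hk : Nat.card β + 1 = k) (s : Finset α) :
    Nonempty ({B : {B : Finset (α ⊕ β) // #B = k} // B.1.toLeft = s} ≃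
      {t : Sym α k // (t : Multiset α).toFinset = s}) := by
  suffices Nonempty ({t : Finset β // #s + #t = k} ≃ {u : Multiset s // #s + u.card = k}) from
    this.map fun e ↦ (toLeftFiberEquiv s k).trans (e.trans (supportFiberEquiv s k).symm)
  obtain hs | hs := le_or_gt #s k
  · obtain ⟨j, rfl⟩ := Nat.exists_eq_add_of_le hs
    simp only [Nat.add_left_cancel_iff]
    exact nonempty_finset_equiv_sym (by rw [Nat.card_eq_fintype_card, Fintype.card_coe, hk])
  · have : IsEmpty {t : Finset β // #s + #t = k} := ⟨fun t ↦ by have := t.2; omega⟩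
    have : IsEmpty {u : Multiset s // #s + u.card = k} := ⟨fun u ↦ by have := u.2; omega⟩
    exact ⟨Equiv.equivOfIsEmpty _ _⟩

theorem exists_equiv_sym_toFinset_eq_toLeft [DecidableEq α] [Finite β] {k : ℕ}
    (hk : Nat.card β + 1 = k) :
    ∃ f : {B : Finset (α ⊕ β) // #B = k} ≃ Sym α k,
      ∀ B, (f B : Multiset α).toFinset = B.1.toLeft :=
  ⟨.ofFiberEquiv fun s ↦ (nonempty_toLeft_fiber_equiv_support_fiber hk s).some,
    Equiv.ofFiberEquiv_map (g := fun t : Sym α k ↦ (t : Multiset α).toFinset) _⟩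

end Fibers

theorem ncard_compl_range_castLE {m n : ℕ} (h : m ≤ n) :
    (Set.range (Fin.castLE h))ᶜ.ncard = n - m := by
  rw [Set.ncard_compl, Set.ncard_range_of_injective (Fin.castLE_injective h), Nat.card_fin,
    Nat.card_fin]

theorem stmt_11_general {α γ : Type*} [DecidableEq α] (ι : α ↪ γ) {k : ℕ}
    [Finite ↥(Set.range ι)ᶜ] (hk : (Set.range ι)ᶜ.ncard + 1 = k) :
    ∃ f : {B : Finset γ // #B = k} ≃ Sym α k,
      ∀ B, ((f B : Multiset α).toFinset.map ι : Set γ) = ↑B.1 ∩ Set.range ι := by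
  classical
  obtain ⟨f, hf⟩ := exists_equiv_sym_toFinset_eq_toLeft (α := α) (β := ↥(Set.range ι)ᶜ) hk
  let e : α ⊕ ↥(Set.range ι)ᶜ ≃ γ :=
    ((Equiv.ofInjective ι ι.injective).sumCongr (.refl _)).trans (Equiv.Set.sumCompl _)
  have he (a : α) : e (.inl a) = ι a := rfl
  refine ⟨(e.symm.finsetCongr.subtypeEquiv fun B ↦ by simp).trans f, fun B ↦ ?_⟩
  have htrace : (B.1.map e.symm.toEmbedding).toLeft = B.1.preimage ι ι.injective.injOn := by
    ext a
    rw [mem_toLeft, mem_map_equiv, e.symm_symm, he, mem_preimage]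
  simp only [Equiv.trans_apply, hf, Equiv.subtypeEquiv_apply, Equiv.finsetCongr_apply, htrace,
    coe_map, coe_preimage, Set.image_preimage_eq_inter_range]

/-- Let `n = m + k - 1`. There is a bijection `f` from the `k`-subsets of `{1,…,n}`
to the `k`-multisets on `{1,…,m}` such that the support of `f B` equals `B ∩ {1,…,m}`
(where `{1,…,m}` is regarded as the first `m` elements of `{1,…,n}`). -/
theorem stmt_11 (k m n : ℕ) (hk : 0 < k) (hm : 0 < m) (hn : n = m + k - 1) :
    ∃ f : {B : Finset (Fin n) // B.card = k} ≃ Sym (Fin m) k,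
      ∀ B : {B : Finset (Fin n) // B.card = k},
        ((f B : Multiset (Fin m)).toFinset.map
            (Fin.castLEEmb (show m ≤ n by omega))
          = B.1 ∩ Finset.univ.filter (fun x : Fin n => (x : ℕ) < m)) := by
  obtain ⟨f, hf⟩ := stmt_11_general (k := k) (Fin.castLEEmb (show m ≤ n by omega))
    (by rw [Fin.coe_castLEEmb, ncard_compl_range_castLE]; omega)
  exact ⟨f, fun B ↦ coe_injective <| by
    rw [hf, Fin.coe_castLEEmb, Fin.range_castLE, coe_inter, coe_filter_univ]⟩
end
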